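/- Let (A,S,Z,Φ) be a structured C*-algebra (1-interpolation). For all a,b ∈ S, if a < b then there exists s ∈ S with ‖s‖ ≤ 1 such that a <_s s* and s* < b. -/

import Mathlib

variable {A : Type*} [CStarAlgebra A] [PartialOrder A] [StarOrderedRing A]

/-- A structured C*-algebra `(A, S, Z, Φ)`. -/
structure StructuredCStar (A : Type*) [CStarAlgebra A] [PartialOrder A]
    [StarOrderedRing A] where
  /-- The expectation. -/
  Φ : A →ₗ[ℂ] A
  /-- The distinguished closed *-subsemigroup. -/
  S : Set A
  /-- The distinguished central C*-subalgebra. -/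
  Z : Set A
  Φ_idem : ∀ a : A, Φ (Φ a) = Φ a
  Φ_contractive : ∀ a : A, ‖Φ a‖ ≤ ‖a‖
  Φ_pos : ∀ a : A, 0 ≤ a → 0 ≤ Φ a
  Φ_mul_left : ∀ a b : A, Φ (Φ a * b) = Φ a * Φ b
  Φ_mul_right : ∀ a b : A, Φ (a * Φ b) = Φ a * Φ b
  S_isClosed : IsClosed S
  S_mul : ∀ a ∈ S, ∀ b ∈ S, a * b ∈ S
  S_star : ∀ a ∈ S, star a ∈ S
  S_smul : ∀ (c : ℂ), ∀ a ∈ S, c • a ∈ S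
  Z_sub_S : Z ⊆ S
  Z_isClosed : IsClosed Z
  Z_add : ∀ a ∈ Z, ∀ b ∈ Z, a + b ∈ Z
  Z_mul : ∀ a ∈ Z, ∀ b ∈ Z, a * b ∈ Z
  Z_star : ∀ a ∈ Z, star a ∈ Z
  Z_smul : ∀ (c : ℂ), ∀ a ∈ Z, c • a ∈ Z
  Z_fixed : ∀ z ∈ Z, Φ z = z
  Z_central : ∀ z ∈ Z, ∀ a : A, z * Φ a = Φ a * z
  PhiS_add : ∀ x ∈ Φ '' S, ∀ y ∈ Φ '' S, x + y ∈ Φ '' S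
  PhiS_ideal_right : ∀ x ∈ Φ '' S, ∀ a : A, x * Φ a ∈ Φ '' S
  PhiS_ideal_left : ∀ x ∈ Φ '' S, ∀ a : A, Φ a * x ∈ Φ '' S
  S_sq_sub_PhiS : ∀ s ∈ S, star s * s ∈ Φ '' S
  PhiS_sub_S : ∀ s ∈ S, Φ s ∈ S

namespace StructuredCStar

variable (𝒜 : StructuredCStar A)

/-- `a <_s b` : domination witnessed by `s`. -/
def domBy (a s b : A) : Prop :=
  a = a * s * b ∧ a = b * s * a ∧
  a * s ∈ 𝒜.Φ '' 𝒜.S ∧ s * a ∈ 𝒜.Φ '' 𝒜.S ∧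
  b * s ∈ 𝒜.Z ∧ s * b ∈ 𝒜.Z

/-- `a < b` : domination. -/
def dom (a b : A) : Prop := ∃ s ∈ 𝒜.S, 𝒜.domBy a s b

/-- `N ⊆ S` is binormal. -/
def Binormal (N : Set A) : Prop :=
  ∀ a ∈ 𝒜.S, ∀ b ∈ 𝒜.S, a * b ∈ N → ∀ z ∈ N, a * z * b ∈ N

/-- `B ⊆ S` is bistable. -/
def Bistable (B : Set A) : Prop :=
  ∀ a ∈ 𝒜.S, ∀ b ∈ 𝒜.S, a * b ∈ B → 𝒜.Φ a * b ∈ B ∧ a * 𝒜.Φ b ∈ B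

/-- `P ⊆ S` is productive. -/
def Productive (P : Set A) : Prop :=
  ∀ a ∈ 𝒜.S, 𝒜.Φ a ∈ closure ((a * ·) '' P) ∧ 𝒜.Φ a ∈ closure ((· * a) '' P)

end StructuredCStar

/-!
Suppose `a <_t b`, so that `t * b` and `b * t` act as units on `a` and lie in the commutative
algebra `Z`; in particular they are normal. Replacing `t` by its modulus turns `b * t` into
`u = b * |t⋆| = |t| * b`. The phase of `t` cancels in the products
`star u * u = star (t * b) * (t * b)` and `u * star u = b * t * star (b * t)`, which therefore lie
in `Z`, whereas `star b * b` and `b * star b` in general only lie in `Φ[S]`. By Fuglede's theorem,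
`u` and `b` intertwine `f (t * b)` with `f (b * t)` for every continuous function `f`. If `f` is a
bump function around `1`, then `star s = u * f (t * b)` is the interpolant: it dominates `a` because
`f 1 = 1`, and it is dominated by `b` because `t * b` is invertible on the support of `f`.
-/

section Intertwining

open scoped ContinuousMapZero NonUnitalContinuousFunctionalCalculus

section RCLike

variable {𝕜 E : Type*} [RCLike 𝕜] [NonUnitalRing E] [StarRing E] [Module 𝕜 E]
  [IsScalarTower 𝕜 E E] [SMulCommClass 𝕜 E E] [TopologicalSpace E] [T2Space E]

theorem semiconjBy_nonUnitalStarAlgHom_apply [SeparatelyContinuousMul E] {s : Set 𝕜}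
    [Fact (0 ∈ s)] [CompactSpace s] {φ ψ : C(s, 𝕜)₀ →⋆ₙₐ[𝕜] E} (hφ : Continuous φ)
    (hψ : Continuous ψ) {b : E} (h_id : SemiconjBy b (φ (.id s)) (ψ (.id s)))
    (h_star_id : SemiconjBy b (star (φ (.id s))) (star (ψ (.id s)))) (f : C(s, 𝕜)₀) :
    SemiconjBy b (φ f) (ψ f) := by
  induction f using ContinuousMapZero.induction_on_of_compact with
  | zero => simp only [map_zero, SemiconjBy.zero_right]
  | id => exact h_id
  | star_id => simpa only [map_star] using h_star_id
  | add _ _ hf hg => simpa only [map_add] using hf.add_right hg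
  | mul _ _ hf hg => simpa only [map_mul] using hf.mul_right hg
  | smul _ _ hf => simp only [map_smul, SemiconjBy, mul_smul_comm, smul_mul_assoc, hf.eq]
  | frequently _ hf => exact hf.mem_of_closed <| isClosed_eq (by fun_prop) (by fun_prop)

theorem semiconjBy_cfcₙ {p : E → Prop} [NonUnitalContinuousFunctionalCalculus 𝕜 E p]
    [IsTopologicalRing E] {b x y : E} (hx : p x) (hy : p y) (h : SemiconjBy b x y)
    (h_star : SemiconjBy b (star x) (star y)) {f : 𝕜 → 𝕜}
    (hf : ContinuousOn f (quasispectrum 𝕜 x ∪ quasispectrum 𝕜 y)) :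
    SemiconjBy b (cfcₙ f x) (cfcₙ f y) := by
  by_cases hf0 : f 0 = 0
  swap
  · simp only [cfcₙ_apply_of_not_map_zero _ hf0, SemiconjBy.zero_right]
  set K := quasispectrum 𝕜 x ∪ quasispectrum 𝕜 y
  have hxK : quasispectrum 𝕜 x ⊆ K := Set.subset_union_left
  have hyK : quasispectrum 𝕜 y ⊆ K := Set.subset_union_right
  have : Fact ((0 : 𝕜) ∈ K) := ⟨hxK (quasispectrum.zero_mem 𝕜 x)⟩
  have : CompactSpace K := isCompact_iff_compactSpace.mp <|
    (isCompact_iff_compactSpace.mpr inferInstance).union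
      (isCompact_iff_compactSpace.mpr inferInstance)
  let φ : C(K, 𝕜)₀ →⋆ₙₐ[𝕜] E := (cfcₙHom hx).comp <|
    ContinuousMapZero.nonUnitalStarAlgHom_precomp 𝕜 ⟨⟨_, continuous_inclusion hxK⟩, rfl⟩
  let ψ : C(K, 𝕜)₀ →⋆ₙₐ[𝕜] E := (cfcₙHom hy).comp <|
    ContinuousMapZero.nonUnitalStarAlgHom_precomp 𝕜 ⟨⟨_, continuous_inclusion hyK⟩, rfl⟩
  have hφ : Continuous φ := (cfcₙHom_continuous hx).comp (ContinuousMapZero.continuous_precomp _)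
  have hψ : Continuous ψ := (cfcₙHom_continuous hy).comp (ContinuousMapZero.continuous_precomp _)
  have hφ_id : φ (.id K) = x := cfcₙHom_id hx
  have hψ_id : ψ (.id K) = y := cfcₙHom_id hy
  rw [cfcₙ_apply f x (hf.mono hxK), cfcₙ_apply f y (hf.mono hyK)]
  exact semiconjBy_nonUnitalStarAlgHom_apply hφ hψ (by rwa [hφ_id, hψ_id])
    (by rwa [hφ_id, hψ_id]) ⟨⟨_, hf.domRestrict⟩, hf0⟩

end RCLike

theorem semiconjBy_cfcₙ_of_isStarNormal {E : Type*} [NonUnitalCStarAlgebra E] {b x y : E}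
    (hx : IsStarNormal x) (hy : IsStarNormal y) (h : SemiconjBy b x y) {f : ℂ → ℂ}
    (hf : Continuous f) : SemiconjBy b (cfcₙ f x) (cfcₙ f y) :=
  semiconjBy_cfcₙ hx hy h (h.star_right hx hy) hf.continuousOn

-- Fuglede's theorem for `t * (b * t) = (t * b) * t`, followed by taking adjoints.
theorem semiconjBy_mul_star_self_star_mul_self {E : Type*} [NonUnitalCStarAlgebra E] {b t : E}
    (htb : IsStarNormal (t * b)) (hbt : IsStarNormal (b * t)) :
    SemiconjBy b (t * star t) (star t * t) := by
  have h : SemiconjBy t (b * t) (t * b) := (mul_assoc t b t).symm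
  have h_star := congrArg star (h.star_right hbt htb).eq
  simp only [star_mul, star_star] at h_star
  rw [SemiconjBy, ← mul_assoc, h_star, mul_assoc]

variable {E : Type*} [CStarAlgebra E] {a z : E} {f : ℂ → ℂ}

theorem mul_cfcₙ_eq_self (hz : IsStarNormal z) (h : a * z = a) (hf : Continuous f)
    (hf0 : f 0 = 0) (hf1 : f 1 = 1) : a * cfcₙ f z = a := by
  have h_one : SemiconjBy a z 1 := by rw [SemiconjBy, h, one_mul]
  have h_cfcₙ := semiconjBy_cfcₙ_of_isStarNormal hz .one h_one hf
  rwa [cfcₙ_eq_cfc (a := (1 : E)), cfc_apply_one, hf1, map_one, SemiconjBy, one_mul] at h_cfcₙ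

theorem cfcₙ_mul_eq_self (hz : IsStarNormal z) (h : z * a = a) (hf : Continuous f)
    (hf0 : f 0 = 0) (hf1 : f 1 = 1) : cfcₙ f z * a = a := by
  have h_one : SemiconjBy a 1 z := by rw [SemiconjBy, h, mul_one]
  have h_cfcₙ := semiconjBy_cfcₙ_of_isStarNormal .one hz h_one hf
  rw [cfcₙ_eq_cfc (a := (1 : E)), cfc_apply_one, hf1, map_one, SemiconjBy, mul_one] at h_cfcₙ
  exact h_cfcₙ.symm

theorem mul_star_eq_self (hz : IsStarNormal z) (h : a * z = a) : a * star z = a := by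
  have h_one : SemiconjBy a z 1 := by rw [SemiconjBy, h, one_mul]
  simpa only [star_one, SemiconjBy, one_mul] using h_one.star_right hz .one

theorem star_mul_eq_self (hz : IsStarNormal z) (h : z * a = a) : star z * a = a := by
  have h_one : SemiconjBy a 1 z := by rw [SemiconjBy, h, mul_one]
  simpa only [star_one, SemiconjBy, mul_one, eq_comm] using h_one.star_right .one hz

end Intertwining

section Modulus

open CFC

variable {E : Type*} [NonUnitalCStarAlgebra E] [PartialOrder E] [StarOrderedRing E]

theorem semiconjBy_sqrt {b x y : E} (hx : 0 ≤ x) (hy : 0 ≤ y) (h : SemiconjBy b x y) :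
    SemiconjBy b (sqrt x) (sqrt y) := by
  have hx' : IsSelfAdjoint x := .of_nonneg hx
  have hy' : IsSelfAdjoint y := .of_nonneg hy
  rw [sqrt_eq_real_sqrt x, sqrt_eq_real_sqrt y]
  exact semiconjBy_cfcₙ hx' hy' h (by rwa [hx'.star_eq, hy'.star_eq])
    Real.continuous_sqrt.continuousOn

theorem semiconjBy_abs_abs_star (t : E) : SemiconjBy t (abs t) (abs (star t)) :=
  semiconjBy_sqrt (star_mul_self_nonneg t) (star_mul_self_nonneg _) <| by
    rw [SemiconjBy, star_star, mul_assoc]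

/-- The product `b * |t⋆|`: in terms of the polar decomposition `t = |t⋆| * v`, this is `b * t`
with the phase `v` of `t` removed. -/
noncomputable def mulModulus (b t : E) : E := b * abs (star t)

theorem mulModulus_mul_star_self (b t : E) :
    mulModulus b t * star (mulModulus b t) = b * t * star (b * t) := by
  calc b * abs (star t) * star (b * abs (star t))
      = b * (abs (star t) * abs (star t)) * star b := by
        rw [star_mul, (abs_nonneg (star t)).star_eq]; simp only [mul_assoc]
    _ = b * t * star (b * t) := by
        rw [abs_mul_abs, star_star, star_mul]; simp only [mul_assoc]

variable {b t : E}

theorem mulModulus_eq_abs_mul (htb : IsStarNormal (t * b)) (hbt : IsStarNormal (b * t)) :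
    mulModulus b t = abs t * b := by
  refine semiconjBy_sqrt (star_mul_self_nonneg _) (star_mul_self_nonneg t) ?_
  simpa only [star_star] using semiconjBy_mul_star_self_star_mul_self htb hbt

theorem star_mulModulus_mul_self (htb : IsStarNormal (t * b)) (hbt : IsStarNormal (b * t)) :
    star (mulModulus b t) * mulModulus b t = star (t * b) * (t * b) := by
  rw [mulModulus_eq_abs_mul htb hbt]
  calc star (abs t * b) * (abs t * b) = star b * (abs t * abs t) * b := by
        rw [star_mul, (abs_nonneg t).star_eq]; simp only [mul_assoc]
    _ = star (t * b) * (t * b) := by rw [abs_mul_abs, star_mul]; simp only [mul_assoc]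

theorem semiconjBy_mulModulus (htb : IsStarNormal (t * b)) (hbt : IsStarNormal (b * t)) :
    SemiconjBy (mulModulus b t) (t * b) (b * t) := by
  calc mulModulus b t * (t * b) = b * (abs (star t) * t) * b := by
        rw [mulModulus]; simp only [mul_assoc]
    _ = b * t * (abs t * b) := by rw [← (semiconjBy_abs_abs_star t).eq]; simp only [mul_assoc]
    _ = b * t * mulModulus b t := by rw [mulModulus_eq_abs_mul htb hbt]

end Modulus

section Bump

open ComplexConjugate

/-- A bump function around `1`, supported in the disc of radius `1 / 2`. -/
noncomputable def bumpAtOne (ζ : ℂ) : ℂ := (max 0 (1 - 2 * ‖ζ - 1‖) : ℝ)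

/-- A continuous function that agrees with `ζ⁻¹` for `1 / 2 ≤ ‖ζ‖`, hence on the support of
`bumpAtOne`, and vanishes at `0` as the non-unital functional calculus requires. -/
noncomputable def truncatedInv (ζ : ℂ) : ℂ := conj ζ / (max ‖ζ‖ (1 / 2) : ℝ) ^ 2

theorem continuous_bumpAtOne : Continuous bumpAtOne := by
  unfold bumpAtOne
  fun_prop

theorem bumpAtOne_zero : bumpAtOne 0 = 0 := by norm_num [bumpAtOne]

theorem bumpAtOne_one : bumpAtOne 1 = 1 := by simp [bumpAtOne]

theorem continuous_truncatedInv : Continuous truncatedInv := by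
  have h_ne (ζ : ℂ) : ((max ‖ζ‖ (1 / 2) : ℝ) : ℂ) ^ 2 ≠ 0 :=
    pow_ne_zero 2 <| Complex.ofReal_ne_zero.mpr (by positivity)
  unfold truncatedInv
  exact Complex.continuous_conj.div (by fun_prop) h_ne

theorem truncatedInv_zero : truncatedInv 0 = 0 := by simp [truncatedInv]

theorem bumpAtOne_eq_zero_of_norm_lt {ζ : ℂ} (hζ : ‖ζ‖ < 1 / 2) : bumpAtOne ζ = 0 := by
  have h_far : 1 - ‖ζ‖ ≤ ‖ζ - 1‖ := by
    simpa only [norm_one, norm_sub_rev] using norm_sub_norm_le (1 : ℂ) ζ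
  rw [bumpAtOne, max_eq_left (by linarith), Complex.ofReal_zero]

theorem mul_truncatedInv_of_le_norm {ζ : ℂ} (hζ : 1 / 2 ≤ ‖ζ‖) : ζ * truncatedInv ζ = 1 := by
  have h_ne : (‖ζ‖ : ℂ) ≠ 0 := Complex.ofReal_ne_zero.mpr (by linarith)
  rw [truncatedInv, max_eq_left hζ, mul_div_assoc', Complex.mul_conj',
    div_self (pow_ne_zero 2 h_ne)]

theorem mul_truncatedInv_mul_bumpAtOne (ζ : ℂ) :
    ζ * truncatedInv ζ * bumpAtOne ζ = bumpAtOne ζ := by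
  rcases lt_or_ge ‖ζ‖ (1 / 2) with h | h
  · rw [bumpAtOne_eq_zero_of_norm_lt h, mul_zero]
  · rw [mul_truncatedInv_of_le_norm h, one_mul]

theorem norm_mul_bumpAtOne_le_one (ζ : ℂ) : ‖ζ * bumpAtOne ζ‖ ≤ 1 := by
  have h_norm : ‖ζ‖ ≤ 1 + ‖ζ - 1‖ := by
    simpa only [norm_one, add_sub_cancel] using norm_add_le 1 (ζ - 1)
  rw [norm_mul, bumpAtOne, Complex.norm_of_nonneg (le_max_left _ _)]
  rcases le_total (1 - 2 * ‖ζ - 1‖) 0 with h | h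
  · rw [max_eq_left h, mul_zero]
    exact zero_le_one
  · rw [max_eq_right h]
    nlinarith [norm_nonneg (ζ - 1)]

variable {E : Type*} [NonUnitalCStarAlgebra E] {z : E}

theorem mul_cfcₙ_truncatedInv_mul_cfcₙ_bumpAtOne (hz : IsStarNormal z) :
    z * cfcₙ truncatedInv z * cfcₙ bumpAtOne z = cfcₙ bumpAtOne z := by
  have hf := continuous_bumpAtOne
  have hg := continuous_truncatedInv
  conv_rhs => rw [← funext mul_truncatedInv_mul_bumpAtOne]
  rw [cfcₙ_mul _ _ z (by fun_prop) (by simp) (by fun_prop) bumpAtOne_zero,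
    cfcₙ_mul _ _ z (by fun_prop) rfl (by fun_prop) truncatedInv_zero, cfcₙ_id' ℂ z]

theorem norm_mul_cfcₙ_bumpAtOne_le_one (hz : IsStarNormal z) : ‖z * cfcₙ bumpAtOne z‖ ≤ 1 := by
  have hf := continuous_bumpAtOne
  have h_mul : z * cfcₙ bumpAtOne z = cfcₙ (fun ζ => ζ * bumpAtOne ζ) z := by
    rw [cfcₙ_mul _ _ z (by fun_prop) rfl (by fun_prop) bumpAtOne_zero, cfcₙ_id' ℂ z]
  rw [h_mul]
  exact norm_cfcₙ_le fun ζ _ => norm_mul_bumpAtOne_le_one ζ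

end Bump

section Interpolant

variable {E : Type*} [NonUnitalCStarAlgebra E] [PartialOrder E] [StarOrderedRing E]
  {b t : E}

/-- The adjoint of the interpolating element `s`: the phase-free version `mulModulus b t` of
`b * t`, cut off to the part of the spectrum of `t * b` near `1`. -/
noncomputable def interpolant (b t : E) : E := mulModulus b t * cfcₙ bumpAtOne (t * b)

theorem star_interpolant_mul_self (htb : IsStarNormal (t * b)) (hbt : IsStarNormal (b * t)) :
    star (interpolant b t) * interpolant b t =
      star (t * b * cfcₙ bumpAtOne (t * b)) * (t * b * cfcₙ bumpAtOne (t * b)) := by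
  calc star (interpolant b t) * interpolant b t
      = star (cfcₙ bumpAtOne (t * b)) * (star (mulModulus b t) * mulModulus b t) *
          cfcₙ bumpAtOne (t * b) := by rw [interpolant, star_mul]; simp only [mul_assoc]
    _ = star (t * b * cfcₙ bumpAtOne (t * b)) * (t * b * cfcₙ bumpAtOne (t * b)) := by
        rw [star_mulModulus_mul_self htb hbt, star_mul (t * b) (cfcₙ bumpAtOne (t * b))]
        simp only [mul_assoc]

theorem norm_interpolant_le_one (htb : IsStarNormal (t * b)) (hbt : IsStarNormal (b * t)) :
    ‖interpolant b t‖ ≤ 1 := by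
  have h_norm : ‖interpolant b t‖ = ‖t * b * cfcₙ bumpAtOne (t * b)‖ := by
    rw [← mul_self_inj (norm_nonneg _) (norm_nonneg _), ← CStarRing.norm_star_mul_self,
      ← CStarRing.norm_star_mul_self, star_interpolant_mul_self htb hbt]
  exact h_norm.trans_le (norm_mul_cfcₙ_bumpAtOne_le_one htb)

theorem interpolant_eq_cfcₙ_mul (htb : IsStarNormal (t * b)) (hbt : IsStarNormal (b * t)) :
    interpolant b t = cfcₙ bumpAtOne (b * t) * mulModulus b t :=
  (semiconjBy_cfcₙ_of_isStarNormal htb hbt (semiconjBy_mulModulus htb hbt)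
    continuous_bumpAtOne).eq

theorem interpolant_mul_star_self (htb : IsStarNormal (t * b)) (hbt : IsStarNormal (b * t)) :
    interpolant b t * star (interpolant b t) =
      cfcₙ bumpAtOne (b * t) * (b * t) * star (cfcₙ bumpAtOne (b * t) * (b * t)) := by
  calc interpolant b t * star (interpolant b t)
      = cfcₙ bumpAtOne (b * t) * (mulModulus b t * star (mulModulus b t)) *
          star (cfcₙ bumpAtOne (b * t)) := by
        rw [interpolant_eq_cfcₙ_mul htb hbt, star_mul]; simp only [mul_assoc]
    _ = cfcₙ bumpAtOne (b * t) * (b * t) * star (cfcₙ bumpAtOne (b * t) * (b * t)) := by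
        rw [mulModulus_mul_star_self, star_mul (cfcₙ bumpAtOne (b * t)) (b * t)]
        simp only [mul_assoc]

end Interpolant

namespace StructuredCStar

variable (𝒜 : StructuredCStar A)

theorem map_star (x : A) : 𝒜.Φ (star x) = star (𝒜.Φ x) :=
  StarHomClass.map_star (PositiveLinearMap.mk₀ 𝒜.Φ 𝒜.Φ_pos) x

theorem image_eq : 𝒜.Φ '' 𝒜.S = {x | 𝒜.Φ x = x} ∩ 𝒜.S := by
  ext x
  constructor
  · rintro ⟨s, hs, rfl⟩
    exact ⟨𝒜.Φ_idem s, 𝒜.PhiS_sub_S s hs⟩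
  · rintro ⟨h, hs⟩
    exact ⟨x, hs, h⟩

theorem isClosed_image : IsClosed (𝒜.Φ '' 𝒜.S) := by
  have hΦ : Continuous 𝒜.Φ := AddMonoidHomClass.continuous_of_bound 𝒜.Φ 1 fun x => by
    simpa only [one_mul] using 𝒜.Φ_contractive x
  rw [image_eq]
  exact (isClosed_eq hΦ continuous_id).inter 𝒜.S_isClosed

theorem image_subset_S : 𝒜.Φ '' 𝒜.S ⊆ 𝒜.S := 𝒜.image_eq ▸ Set.inter_subset_right

theorem Z_subset_image : 𝒜.Z ⊆ 𝒜.Φ '' 𝒜.S :=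
  fun z hz => ⟨z, 𝒜.Z_sub_S hz, 𝒜.Z_fixed z hz⟩

variable {𝒜} in
theorem mul_mem_image {x y : A} (hx : x ∈ 𝒜.Φ '' 𝒜.S) (hy : y ∈ 𝒜.Φ '' 𝒜.S) :
    x * y ∈ 𝒜.Φ '' 𝒜.S := by
  obtain ⟨s, -, rfl⟩ := hy
  exact 𝒜.PhiS_ideal_right x hx s

variable {𝒜} in
theorem star_mem_image {x : A} (hx : x ∈ 𝒜.Φ '' 𝒜.S) : star x ∈ 𝒜.Φ '' 𝒜.S := by
  obtain ⟨s, hs, rfl⟩ := hx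
  exact ⟨star s, 𝒜.S_star s hs, 𝒜.map_star s⟩

/-- `Φ[S]` as a `*`-subalgebra, which gives access to the continuous functional calculus inside
it. The empty set satisfies the conditions on `S` in `StructuredCStar`, so `S` has to be assumed
nonempty. -/
def imageSubalgebra (hS : 𝒜.S.Nonempty) : NonUnitalStarSubalgebra ℂ A where
  carrier := 𝒜.Φ '' 𝒜.S
  zero_mem' := ⟨0, by simpa only [zero_smul] using 𝒜.S_smul 0 _ hS.some_mem, map_zero 𝒜.Φ⟩
  add_mem' {x y} hx hy := 𝒜.PhiS_add x hx y hy
  mul_mem' := mul_mem_image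
  smul_mem' c := by
    rintro _ ⟨s, hs, rfl⟩
    exact ⟨c • s, 𝒜.S_smul c s hs, _root_.map_smul 𝒜.Φ c s⟩
  star_mem' := star_mem_image

/-- `Z` as a `*`-subalgebra, for the same purpose and with the same proviso as
`imageSubalgebra`. -/
def centralSubalgebra (hZ : 𝒜.Z.Nonempty) : NonUnitalStarSubalgebra ℂ A where
  carrier := 𝒜.Z
  zero_mem' := by simpa only [zero_smul] using 𝒜.Z_smul 0 _ hZ.some_mem
  add_mem' {x y} hx hy := 𝒜.Z_add x hx y hy
  mul_mem' {x y} hx hy := 𝒜.Z_mul x hx y hy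
  smul_mem' c x hx := 𝒜.Z_smul c x hx
  star_mem' {x} hx := 𝒜.Z_star x hx

variable {𝒜} {a b t x z : A}

theorem abs_mem_image (ht : t ∈ 𝒜.S) : CFC.abs t ∈ 𝒜.Φ '' 𝒜.S := by
  have h_closed : IsClosed (𝒜.imageSubalgebra ⟨t, ht⟩ : Set A) := 𝒜.isClosed_image
  rw [CFC.abs, CFC.sqrt_eq_real_sqrt _ (star_mul_self_nonneg t)]
  exact cfcₙ_mem (s := 𝒜.imageSubalgebra ⟨t, ht⟩) Real.sqrt (𝒜.S_sq_sub_PhiS t ht)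

theorem cfcₙ_mem_Z (hz : z ∈ 𝒜.Z) (f : ℂ → ℂ) : cfcₙ f z ∈ 𝒜.Z := by
  have h_closed : IsClosed (𝒜.centralSubalgebra ⟨z, hz⟩ : Set A) := 𝒜.Z_isClosed
  exact cfcₙ_mem (s := 𝒜.centralSubalgebra ⟨z, hz⟩) f hz

theorem commute_of_mem_Z (hz : z ∈ 𝒜.Z) (hx : x ∈ 𝒜.Φ '' 𝒜.S) : Commute z x := by
  obtain ⟨s, -, rfl⟩ := hx
  exact 𝒜.Z_central z hz s

theorem isStarNormal_of_mem_Z (hz : z ∈ 𝒜.Z) : IsStarNormal z :=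
  ⟨commute_of_mem_Z (𝒜.Z_star z hz) (𝒜.Z_subset_image hz)⟩

theorem interpolant_mem_S (hb : b ∈ 𝒜.S) (ht : t ∈ 𝒜.S) (htb : t * b ∈ 𝒜.Z) :
    interpolant b t ∈ 𝒜.S := by
  have h_abs : CFC.abs (star t) ∈ 𝒜.S := 𝒜.image_subset_S (abs_mem_image (𝒜.S_star t ht))
  have h_bump : cfcₙ bumpAtOne (t * b) ∈ 𝒜.S := 𝒜.Z_sub_S (cfcₙ_mem_Z htb bumpAtOne)
  exact 𝒜.S_mul _ (𝒜.S_mul b hb _ h_abs) _ h_bump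

theorem mul_star_interpolant_mem_image (hb : b ∈ 𝒜.S) (ht : t ∈ 𝒜.S) (h : 𝒜.domBy a t b) :
    a * star (interpolant b t) ∈ 𝒜.Φ '' 𝒜.S := by
  obtain ⟨h_mul, -, h_at, -, hbt, htb⟩ := h
  have h_eq : a * star (interpolant b t) =
      a * t * (star (star b) * star b) * (CFC.abs t * star (cfcₙ bumpAtOne (b * t))) := by
    rw [interpolant_eq_cfcₙ_mul (isStarNormal_of_mem_Z htb) (isStarNormal_of_mem_Z hbt),
      mulModulus_eq_abs_mul (isStarNormal_of_mem_Z htb) (isStarNormal_of_mem_Z hbt), star_mul,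
      star_mul, (CFC.abs_nonneg t).star_eq, star_star]
    nth_rw 1 [h_mul]
    noncomm_ring
  rw [h_eq]
  exact mul_mem_image (mul_mem_image h_at (𝒜.S_sq_sub_PhiS _ (𝒜.S_star b hb))) <|
    mul_mem_image (abs_mem_image ht) <| star_mem_image (𝒜.Z_subset_image (cfcₙ_mem_Z hbt _))

theorem star_interpolant_mul_mem_image (hb : b ∈ 𝒜.S) (ht : t ∈ 𝒜.S) (h : 𝒜.domBy a t b) :
    star (interpolant b t) * a ∈ 𝒜.Φ '' 𝒜.S := by
  obtain ⟨-, h_mul, -, h_ta, -, htb⟩ := h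
  have h_eq : star (interpolant b t) * a =
      star (cfcₙ bumpAtOne (t * b)) * CFC.abs (star t) * (star b * b * (t * a)) := by
    rw [interpolant, mulModulus, star_mul, star_mul, (CFC.abs_nonneg (star t)).star_eq]
    nth_rw 1 [h_mul]
    noncomm_ring
  rw [h_eq]
  exact mul_mem_image (mul_mem_image (star_mem_image (𝒜.Z_subset_image (cfcₙ_mem_Z htb _)))
    (abs_mem_image (𝒜.S_star t ht))) <| mul_mem_image (𝒜.S_sq_sub_PhiS b hb) h_ta

theorem domBy_star_interpolant (hb : b ∈ 𝒜.S) (ht : t ∈ 𝒜.S) (h : 𝒜.domBy a t b) :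
    𝒜.domBy a (star (interpolant b t)) (interpolant b t) := by
  obtain ⟨h_atb, h_bta, -, -, hbt, htb⟩ := id h
  have htb_normal := isStarNormal_of_mem_Z htb
  have hbt_normal := isStarNormal_of_mem_Z hbt
  have h_left := 𝒜.Z_mul _ htb _ (cfcₙ_mem_Z htb bumpAtOne)
  have h_right := 𝒜.Z_mul _ (cfcₙ_mem_Z hbt bumpAtOne) _ hbt
  have h_mul_left : a * (t * b * cfcₙ bumpAtOne (t * b)) = a := by
    have h_unit : a * (t * b) = a := by rw [← mul_assoc, ← h_atb]
    rw [← mul_assoc, h_unit, mul_cfcₙ_eq_self htb_normal h_unit continuous_bumpAtOne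
      bumpAtOne_zero bumpAtOne_one]
  have h_right_mul : cfcₙ bumpAtOne (b * t) * (b * t) * a = a := by
    rw [mul_assoc, ← h_bta, cfcₙ_mul_eq_self hbt_normal h_bta.symm continuous_bumpAtOne
      bumpAtOne_zero bumpAtOne_one]
  refine ⟨?_, ?_, mul_star_interpolant_mem_image hb ht h, star_interpolant_mul_mem_image hb ht h,
    ?_, ?_⟩
  · rw [mul_assoc, star_interpolant_mul_self htb_normal hbt_normal, ← mul_assoc,
      mul_star_eq_self (isStarNormal_of_mem_Z h_left) h_mul_left, h_mul_left]
  · rw [interpolant_mul_star_self htb_normal hbt_normal, mul_assoc,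
      star_mul_eq_self (isStarNormal_of_mem_Z h_right) h_right_mul, h_right_mul]
  · rw [interpolant_mul_star_self htb_normal hbt_normal]
    exact 𝒜.Z_mul _ h_right _ (𝒜.Z_star _ h_right)
  · rw [star_interpolant_mul_self htb_normal hbt_normal]
    exact 𝒜.Z_mul _ (𝒜.Z_star _ h_left) _ h_left

theorem interpolant_domBy (ht : t ∈ 𝒜.S) (htb : t * b ∈ 𝒜.Z) (hbt : b * t ∈ 𝒜.Z) :
    𝒜.domBy (interpolant b t) (t * cfcₙ truncatedInv (b * t)) b := by
  have htb_normal := isStarNormal_of_mem_Z htb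
  have hbt_normal := isStarNormal_of_mem_Z hbt
  have h_bump_left := cfcₙ_mem_Z htb bumpAtOne
  have h_bump_right := cfcₙ_mem_Z hbt bumpAtOne
  have h_left := 𝒜.Z_mul _ htb _ (cfcₙ_mem_Z htb truncatedInv)
  have h_right := 𝒜.Z_mul _ hbt _ (cfcₙ_mem_Z hbt truncatedInv)
  have h_rb : t * cfcₙ truncatedInv (b * t) * b = t * b * cfcₙ truncatedInv (t * b) := by
    have h_semiconj : SemiconjBy b (t * b) (b * t) := (mul_assoc b t b).symm
    rw [mul_assoc, mul_assoc, ← (semiconjBy_cfcₙ_of_isStarNormal htb_normal hbt_normal h_semiconj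
      continuous_truncatedInv).eq]
  have h_image_left : interpolant b t * (t * cfcₙ truncatedInv (b * t)) =
      cfcₙ bumpAtOne (b * t) * (CFC.abs t * (b * t * cfcₙ truncatedInv (b * t))) := by
    rw [interpolant_eq_cfcₙ_mul htb_normal hbt_normal, mulModulus_eq_abs_mul htb_normal hbt_normal]
    noncomm_ring
  have h_image_right : t * cfcₙ truncatedInv (b * t) * interpolant b t =
      t * b * cfcₙ truncatedInv (t * b) * (CFC.abs (star t) * cfcₙ bumpAtOne (t * b)) := by
    rw [interpolant, mulModulus, ← h_rb]
    noncomm_ring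
  refine ⟨?_, ?_, ?_, ?_, ?_, ?_⟩
  · rw [mul_assoc, h_rb, interpolant, mul_assoc,
      ← (commute_of_mem_Z h_left (𝒜.Z_subset_image h_bump_left)).eq,
      mul_cfcₙ_truncatedInv_mul_cfcₙ_bumpAtOne htb_normal]
  · rw [← mul_assoc b, interpolant_eq_cfcₙ_mul htb_normal hbt_normal, ← mul_assoc,
      mul_cfcₙ_truncatedInv_mul_cfcₙ_bumpAtOne hbt_normal]
  · rw [h_image_left]
    exact mul_mem_image (𝒜.Z_subset_image h_bump_right)
      (mul_mem_image (abs_mem_image ht) (𝒜.Z_subset_image h_right))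
  · rw [h_image_right]
    exact mul_mem_image (𝒜.Z_subset_image h_left)
      (mul_mem_image (abs_mem_image (𝒜.S_star t ht)) (𝒜.Z_subset_image h_bump_left))
  · rwa [← mul_assoc]
  · rwa [h_rb]

theorem interpolant_dom (ht : t ∈ 𝒜.S) (htb : t * b ∈ 𝒜.Z) (hbt : b * t ∈ 𝒜.Z) :
    𝒜.dom (interpolant b t) b :=
  ⟨_, 𝒜.S_mul t ht _ (𝒜.Z_sub_S (cfcₙ_mem_Z hbt truncatedInv)), interpolant_domBy ht htb hbt⟩

end StructuredCStar

/-- 1-interpolation: if `a < b` then there is `s ∈ S` with `‖s‖ ≤ 1`,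
`a <_s s*` and `s* < b`. -/
theorem StructuredCStar.one_interpolation (𝒜 : StructuredCStar A) {a b : A}
    (ha : a ∈ 𝒜.S) (hb : b ∈ 𝒜.S) (h : 𝒜.dom a b) :
    ∃ s ∈ 𝒜.S, ‖s‖ ≤ 1 ∧ 𝒜.domBy a s (star s) ∧ 𝒜.dom (star s) b := by
  obtain ⟨t, ht, h_domBy⟩ := h
  obtain ⟨-, -, -, -, hbt, htb⟩ := id h_domBy
  have htb_normal := isStarNormal_of_mem_Z htb
  have hbt_normal := isStarNormal_of_mem_Z hbt
  refine ⟨star (interpolant b t), 𝒜.S_star _ (interpolant_mem_S hb ht htb), ?_, ?_, ?_⟩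
  · exact (norm_star _).trans_le (norm_interpolant_le_one htb_normal hbt_normal)
  · rw [star_star]
    exact domBy_star_interpolant hb ht h_domBy
  · rw [star_star]
    exact interpolant_dom ht htb hbt
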